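/- Let G be a weighted digraph with positive edge weights on a finite vertex set V, and let π : V → ℕ be injective. Let P = (x₀, …, x_k) be a shortest path from u = x₀ to v = x_k, and let w = x_m be an internal vertex of P (0 < m < k) such that π(w) ≤ π(z) for every vertex z that is an internal vertex of some shortest path from u to v. Let u′ = x_i and v′ = x_j with i < m < j. Then w is an internal vertex of some shortest path from u′ to v′, and π(w) ≤ π(z′) for every vertex z′ that is an internal vertex of some shortest path from u′ to v′. -/

import Mathlib

/-- The length of a walk `p` (a list of vertices) in the weighted digraph with
weight function `W`, i.e. the sum of the weights of consecutive pairs. -/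
def walkLen {V : Type*} (W : V → V → ℕ∞) (p : List V) : ℕ∞ :=
  ((p.zip p.tail).map fun q => W q.1 q.2).sum

/-- `p` is a walk from `u` to `v`: it is nonempty, starts at `u`, ends at `v`,
and every consecutive pair is an edge (finite weight). -/
def IsWalk {V : Type*} (W : V → V → ℕ∞) (u v : V) (p : List V) : Prop :=
  p.head? = some u ∧ p.getLast? = some v ∧ p.Chain' fun x y => W x y ≠ ⊤

/-- The distance from `u` to `v`: the infimum of lengths of walks from `u` to `v`
(`⊤` if there is no walk). -/
noncomputable def gdist {V : Type*} (W : V → V → ℕ∞) (u v : V) : ℕ∞ :=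
  sInf {d | ∃ p, IsWalk W u v p ∧ walkLen W p = d}

/-- `p` is a shortest path from `u` to `v`: a walk from `u` to `v` whose length
equals the distance. -/
def IsShortestPath {V : Type*} (W : V → V → ℕ∞) (u v : V) (p : List V) : Prop :=
  IsWalk W u v p ∧ walkLen W p = gdist W u v

/-!
A vertex `x` of a shortest path from `u` to `v` satisfies `‖ux‖ + ‖xv‖ = ‖uv‖`, so any shortest path
from `u` to `x` followed by any shortest path from `x` to `v` is again a shortest path from `u` to
`v`. Using this at both ends of the subpath, every internal vertex of a shortest path from `u'` to
`v'` is an internal vertex of a shortest path from `u` to `v`, and a label that is minimal among the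
latter is minimal among the former.
-/

/-- The set of internal vertices of shortest paths from `u` to `v`, among which labels are
minimised. It is empty when `v` cannot be reached from `u`. -/
def shortestPathInterior {V : Type*} (W : V → V → ℕ∞) (u v : V) : Set V :=
  {z | ∃ q, IsShortestPath W u v q ∧ z ∈ q.tail.dropLast}

section ShortestPaths

variable {V : Type*} {W : V → V → ℕ∞} {u v x : V} {p s t : List V}

theorem getElem_mem_tail_dropLast {m : ℕ} (hm : 0 < m) (hmp : m + 1 < p.length) :
    p[m] ∈ p.tail.dropLast := by
  have hlen : m - 1 < p.tail.dropLast.length := by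
    rw [List.length_dropLast, List.length_tail]
    omega
  simpa only [List.getElem_dropLast, List.getElem_tail, Nat.sub_add_cancel hm] using
    List.getElem_mem hlen

theorem tail_dropLast_sublist_tail_dropLast (h : s.Sublist t) :
    s.tail.dropLast.Sublist t.tail.dropLast := by
  have hrev := h.tail.reverse.tail.reverse
  simpa only [List.tail_reverse, List.reverse_reverse] using hrev

theorem walkLen_singleton (W : V → V → ℕ∞) (x : V) : walkLen W [x] = 0 := by
  simp [walkLen]

theorem walkLen_cons_cons (W : V → V → ℕ∞) (x y : V) (t : List V) :
    walkLen W (x :: y :: t) = W x y + walkLen W (y :: t) := by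
  simp [walkLen]

theorem walkLen_append_cons (W : V → V → ℕ∞) (s : List V) (x : V) (t : List V) :
    walkLen W (s ++ x :: t) = walkLen W (s ++ [x]) + walkLen W (x :: t) := by
  induction s with
  | nil => simp only [List.nil_append, walkLen_singleton, zero_add]
  | cons a s ih =>
    cases s with
    | nil => simp only [List.cons_append, List.nil_append, walkLen_cons_cons,
        walkLen_singleton, add_zero]
    | cons b s =>
      simp only [List.cons_append, walkLen_cons_cons] at ih ⊢
      rw [ih, add_assoc]

theorem walkLen_ne_top_of_isChain (hp : p.IsChain fun x y => W x y ≠ ⊤) : walkLen W p ≠ ⊤ := by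
  induction hp with
  | nil => simp [walkLen]
  | singleton x => simp [walkLen_singleton]
  | cons_cons hxy _ ih =>
    rw [walkLen_cons_cons]
    exact WithTop.add_ne_top.2 ⟨hxy, ih⟩

theorem IsWalk.walkLen_ne_top (hp : IsWalk W u v p) : walkLen W p ≠ ⊤ :=
  walkLen_ne_top_of_isChain hp.2.2

theorem IsWalk.gdist_le_walkLen (hp : IsWalk W u v p) : gdist W u v ≤ walkLen W p :=
  sInf_le ⟨p, hp, rfl⟩

theorem IsWalk.exists_eq_append_singleton (hp : IsWalk W u v p) : ∃ s, p = s ++ [v] :=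
  List.getLast?_eq_some_iff.1 hp.2.1

theorem IsWalk.exists_eq_cons (hp : IsWalk W u v p) : ∃ t, p = u :: t :=
  List.head?_eq_some_iff.1 hp.1

theorem isWalk_append_cons :
    IsWalk W u v (s ++ x :: t) ↔ IsWalk W u x (s ++ [x]) ∧ IsWalk W x v (x :: t) := by
  have hhead : (s ++ x :: t).head? = (s ++ [x]).head? := by
    simp only [List.head?_append, List.head?_cons]
  have hlast : (s ++ x :: t).getLast? = (x :: t).getLast? := List.getLast?_append_cons s x t
  constructor
  · rintro ⟨hu, hv, hchain⟩
    obtain ⟨hs, ht⟩ := List.isChain_split.1 hchain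
    exact ⟨⟨hhead.symm.trans hu, List.getLast?_concat, hs⟩, List.head?_cons,
      hlast.symm.trans hv, ht⟩
  · rintro ⟨⟨hu, -, hs⟩, -, hv, ht⟩
    exact ⟨hhead.trans hu, hlast.trans hv, List.isChain_split.2 ⟨hs, ht⟩⟩

theorem exists_isShortestPath (h : gdist W u v ≠ ⊤) : ∃ p, IsShortestPath W u v p := by
  have hne : {d | ∃ p, IsWalk W u v p ∧ walkLen W p = d}.Nonempty := by
    rw [Set.nonempty_iff_ne_empty]
    intro hempty
    exact h (by rw [gdist, hempty, sInf_empty])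
  exact csInf_mem hne

theorem gdist_triangle (W : V → V → ℕ∞) (u x v : V) :
    gdist W u v ≤ gdist W u x + gdist W x v := by
  by_cases hux : gdist W u x = ⊤
  · simp [hux]
  by_cases hxv : gdist W x v = ⊤
  · simp [hxv]
  obtain ⟨p, hp, hp_len⟩ := exists_isShortestPath hux
  obtain ⟨q, hq, hq_len⟩ := exists_isShortestPath hxv
  obtain ⟨s, rfl⟩ := hp.exists_eq_append_singleton
  obtain ⟨t, rfl⟩ := hq.exists_eq_cons
  rw [← hp_len, ← hq_len, ← walkLen_append_cons]
  exact (isWalk_append_cons.2 ⟨hp, hq⟩).gdist_le_walkLen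

theorem isShortestPath_append_cons :
    IsShortestPath W u v (s ++ x :: t) ↔
      IsShortestPath W u x (s ++ [x]) ∧ IsShortestPath W x v (x :: t) ∧
        gdist W u x + gdist W x v = gdist W u v := by
  constructor
  · rintro ⟨hwalk, hlen⟩
    obtain ⟨hs, ht⟩ := isWalk_append_cons.1 hwalk
    rw [walkLen_append_cons] at hlen
    have hle : walkLen W (s ++ [x]) + walkLen W (x :: t) ≤ gdist W u x + gdist W x v :=
      hlen.trans_le (gdist_triangle W u x v)
    have hs_len : walkLen W (s ++ [x]) = gdist W u x :=
      le_antisymm ((ENat.add_le_add_iff_right ht.walkLen_ne_top).1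
        (hle.trans (by gcongr; exact ht.gdist_le_walkLen))) hs.gdist_le_walkLen
    have ht_len : walkLen W (x :: t) = gdist W x v :=
      le_antisymm ((ENat.add_le_add_iff_left hs.walkLen_ne_top).1
        (hle.trans (by gcongr; exact hs.gdist_le_walkLen))) ht.gdist_le_walkLen
    exact ⟨⟨hs, hs_len⟩, ⟨ht, ht_len⟩, by rw [← hs_len, ← ht_len, hlen]⟩
  · rintro ⟨⟨hs, hs_len⟩, ⟨ht, ht_len⟩, hx⟩
    exact ⟨isWalk_append_cons.2 ⟨hs, ht⟩, by rw [walkLen_append_cons, hs_len, ht_len, hx]⟩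

theorem IsShortestPath.gdist_ne_top (hp : IsShortestPath W u v p) : gdist W u v ≠ ⊤ :=
  hp.2 ▸ hp.1.walkLen_ne_top

theorem isShortestPath_iff_take_drop {i : ℕ} (hi : i < p.length) :
    IsShortestPath W u v p ↔
      IsShortestPath W u p[i] (p.take (i + 1)) ∧ IsShortestPath W p[i] v (p.drop i) ∧
        gdist W u p[i] + gdist W p[i] v = gdist W u v := by
  rw [List.take_succ_eq_append_getElem hi, List.drop_eq_getElem_cons hi,
    ← isShortestPath_append_cons, ← List.drop_eq_getElem_cons hi, List.take_append_drop]

theorem shortestPathInterior_subset_left (hx : gdist W u x + gdist W x v = gdist W u v)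
    (huv : gdist W u v ≠ ⊤) : shortestPathInterior W u x ⊆ shortestPathInterior W u v := by
  rintro z ⟨q, hq, hz⟩
  obtain ⟨r, hr⟩ := exists_isShortestPath (WithTop.add_ne_top.1 (hx ▸ huv)).2
  obtain ⟨s, rfl⟩ := hq.1.exists_eq_append_singleton
  obtain ⟨t, rfl⟩ := hr.1.exists_eq_cons
  have hsub : (s ++ [x]).Sublist (s ++ x :: t) := by simp
  exact ⟨s ++ x :: t, isShortestPath_append_cons.2 ⟨hq, hr, hx⟩,
    (tail_dropLast_sublist_tail_dropLast hsub).subset hz⟩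

theorem shortestPathInterior_subset_right (hx : gdist W u x + gdist W x v = gdist W u v)
    (huv : gdist W u v ≠ ⊤) : shortestPathInterior W x v ⊆ shortestPathInterior W u v := by
  rintro z ⟨q, hq, hz⟩
  obtain ⟨r, hr⟩ := exists_isShortestPath (WithTop.add_ne_top.1 (hx ▸ huv)).1
  obtain ⟨s, rfl⟩ := hr.1.exists_eq_append_singleton
  obtain ⟨t, rfl⟩ := hq.1.exists_eq_cons
  have hsub : (x :: t).Sublist (s ++ x :: t) := List.sublist_append_right s (x :: t)
  exact ⟨s ++ x :: t, isShortestPath_append_cons.2 ⟨hr, hq, hx⟩,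
    (tail_dropLast_sublist_tail_dropLast hsub).subset hz⟩

namespace IsShortestPath

theorem drop_take (hp : IsShortestPath W u v p) {i j : ℕ} (hij : i ≤ j) (hj : j < p.length) :
    IsShortestPath W p[i] p[j] ((p.take (j + 1)).drop i) := by
  have hi : i < (p.take (j + 1)).length := by
    rw [List.length_take]
    omega
  have htake := ((isShortestPath_iff_take_drop hj).1 hp).1
  simpa only [List.getElem_take] using ((isShortestPath_iff_take_drop hi).1 htake).2.1

theorem getElem_mem_shortestPathInterior (hp : IsShortestPath W u v p) {i m j : ℕ}
    (him : i < m) (hmj : m < j) (hj : j < p.length) :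
    p[m] ∈ shortestPathInterior W p[i] p[j] := by
  refine ⟨_, hp.drop_take (him.trans hmj).le hj, ?_⟩
  have hlen : ((p.take (j + 1)).drop i).length = j + 1 - i := by
    rw [List.length_drop, List.length_take]
    omega
  have hmem := getElem_mem_tail_dropLast (p := (p.take (j + 1)).drop i) (m := m - i)
    (by omega) (by omega)
  simpa only [List.getElem_drop, List.getElem_take, Nat.add_sub_cancel' him.le] using hmem

theorem shortestPathInterior_getElem_subset (hp : IsShortestPath W u v p) {i j : ℕ}
    (hij : i ≤ j) (hj : j < p.length) :
    shortestPathInterior W p[i] p[j] ⊆ shortestPathInterior W u v := by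
  have hi : i < (p.take (j + 1)).length := by
    rw [List.length_take]
    omega
  obtain ⟨htake, -, hj_dist⟩ := (isShortestPath_iff_take_drop hj).1 hp
  obtain ⟨-, -, hi_dist⟩ := (isShortestPath_iff_take_drop hi).1 htake
  rw [List.getElem_take] at hi_dist
  exact (shortestPathInterior_subset_right hi_dist htake.gdist_ne_top).trans
    (shortestPathInterior_subset_left hj_dist hp.gdist_ne_top)

end IsShortestPath

theorem min_label_internal_vertex_of_subpath_general {α : Type*} [LE α] (π : V → α)
    (hp : IsShortestPath W u v p) {i m j : ℕ} (him : i < m) (hmj : m < j) (hj : j < p.length)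
    (hmin : ∀ z ∈ shortestPathInterior W u v, π p[m] ≤ π z) :
    p[m] ∈ shortestPathInterior W p[i] p[j] ∧
      ∀ z ∈ shortestPathInterior W p[i] p[j], π p[m] ≤ π z :=
  ⟨hp.getElem_mem_shortestPathInterior him hmj hj, fun z hz =>
    hmin z (hp.shortestPathInterior_getElem_subset (him.trans hmj).le hj hz)⟩

end ShortestPaths

theorem min_label_internal_vertex_of_subpath {V : Type*} [Fintype V]
    (W : V → V → ℕ∞) (hpos : ∀ x y, W x y ≠ 0)
    (π : V → ℕ) (hπ : Function.Injective π)
    (u v : V) (p : List V) (hp : IsShortestPath W u v p)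
    (m : ℕ) (hm0 : 0 < m) (hmk : m + 1 < p.length)
    (w : V) (hw : w = p.get ⟨m, lt_trans (Nat.lt_succ_self m) hmk⟩)
    (hmin : ∀ z : V, (∃ q, IsShortestPath W u v q ∧ z ∈ q.tail.dropLast) → π w ≤ π z)
    (i j : ℕ) (him : i < m) (hmj : m < j) (hj : j < p.length) :
    (∃ q, IsShortestPath W (p.get ⟨i, lt_trans (lt_trans him hmj) hj⟩)
        (p.get ⟨j, hj⟩) q ∧ w ∈ q.tail.dropLast) ∧
      ∀ z' : V, (∃ q, IsShortestPath W (p.get ⟨i, lt_trans (lt_trans him hmj) hj⟩)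
          (p.get ⟨j, hj⟩) q ∧ z' ∈ q.tail.dropLast) → π w ≤ π z' := by
  subst hw
  exact min_label_internal_vertex_of_subpath_general π hp him hmj hj hmin
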